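/- Let DES = (R, S, Σ_st, F, F_int) be a fully-typed data exchange setting that is key-covered, let I be a valid instance of R, and let J_0 be the canonical target instance of I (the set of all facts Triple(f^{F_int}(ν(x)), p, ν^{F_int}(o)), T_s(f^{F_int}(ν(x))), T_o(ν^{F_int}(o)) over all stds σ ∈ Σ_st and all valuations ν mapping every atom of the body of σ to a fact of I). Then J_0 satisfies every sentence mult≤1(T, p) of Σ_S; that is, for every T ∈ T and p :: T'^μ ∈ δ(T) with μ ∈ {1, ?}, and for all a, b_1, b_2 ∈ Dom, if T(a) ∈ J_0, Triple(a, p, b_1) ∈ J_0 and Triple(a, p, b_2) ∈ J_0, then b_1 = b_2. -/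

import Mathlib

namespace RdfDE

/-- The RDF domain: a countably infinite domain partitioned into IRIs, literals and
blank nodes, with a distinguished infinite subset of null literals. -/
structure RDFDom (Dom : Type) where
  Iri : Set Dom
  Lit : Set Dom
  Blank : Set Dom
  NullLit : Set Dom
  cover : Iri ∪ Lit ∪ Blank = Set.univ
  disjIL : Disjoint Iri Lit
  disjIB : Disjoint Iri Blank
  disjLB : Disjoint Lit Blank
  nullSub : NullLit ⊆ Lit
  infIri : Iri.Infinite
  infLit : Lit.Infinite
  infBlank : Blank.Infinite
  infNull : NullLit.Infinite

/-- Multiplicities 1, ?, *, +. -/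
inductive Mult : Type
  | one | opt | star | plus

/-- A triple constraint `p :: T'^μ`; `target = none` stands for `Lit`. -/
structure TC (Dom Shape : Type) where
  prop : Dom
  target : Option Shape
  mult : Mult

/-- A ShEx schema over the (finite) type `Shape` of shape names. -/
structure ShEx (Dom Shape : Type) (D : RDFDom Dom) where
  δ : Shape → Set (TC Dom Shape)
  finite : ∀ T, (δ T).Finite
  propIri : ∀ T : Shape, ∀ tc ∈ δ T, tc.prop ∈ D.Iri
  uniqueProp : ∀ T : Shape, ∀ tc1 ∈ δ T, ∀ tc2 ∈ δ T, tc1.prop = tc2.prop → tc1 = tc2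

/-- Facts of the target signature `G_T`: a ternary `Triple`, unary `Lit`,
and a unary relation for each shape name. -/
inductive Fact (Dom Shape : Type) : Type
  | triple (s p o : Dom)
  | lit (n : Dom)
  | shape (T : Shape) (n : Dom)

/-- The unary fact `T(n)` where `T ∈ 𝒯 ∪ {Lit}`. -/
def factOf {Dom Shape : Type} (t : Option Shape) (n : Dom) : Fact Dom Shape :=
  match t with
  | none => .lit n
  | some T => .shape T n

/-- Cardinality constraint imposed by a multiplicity on the set of objects. -/
def multOk {Dom : Type} (μ : Mult) (K : Set Dom) : Prop :=
  match μ with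
  | .one => ∃! y, y ∈ K
  | .opt => K.Subsingleton
  | .star => True
  | .plus => K.Nonempty

/-- `J` satisfies every sentence of `Σ_S`: the sort sentences, and for each
triple constraint the sentences `tc`, `mult≥1` (if μ ∈ {1,+}) and `mult≤1` (if μ ∈ {1,?}). -/
def satSigma {Dom Shape : Type} (D : RDFDom Dom) (S : ShEx Dom Shape D)
    (J : Set (Fact Dom Shape)) : Prop :=
  (∀ (T : Shape) (n : Dom), Fact.shape T n ∈ J → n ∈ D.Iri ∪ D.Blank) ∧
  (∀ n : Dom, Fact.lit n ∈ J → n ∈ D.Lit) ∧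
  (∀ T : Shape, ∀ tc ∈ S.δ T,
    (∀ x y : Dom, Fact.shape T x ∈ J → Fact.triple x tc.prop y ∈ J →
      factOf tc.target y ∈ J) ∧
    ((tc.mult = Mult.one ∨ tc.mult = Mult.plus) →
      ∀ x : Dom, Fact.shape T x ∈ J → ∃ y : Dom, Fact.triple x tc.prop y ∈ J) ∧
    ((tc.mult = Mult.one ∨ tc.mult = Mult.opt) →
      ∀ x y z : Dom, Fact.shape T x ∈ J → Fact.triple x tc.prop y ∈ J →
        Fact.triple x tc.prop z ∈ J → y = z))

/-- Nodes of a graph: values occurring in subject or object position. -/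
def nodes {Dom : Type} (G : Set (Dom × Dom × Dom)) : Set Dom :=
  {n | ∃ t ∈ G, t.1 = n ∨ t.2.2 = n}

/-- `G` is an RDF graph: triples lie in `(Iri ∪ Blank) × Iri × (Iri ∪ Blank ∪ Lit)`. -/
def isRDFGraph {Dom : Type} (D : RDFDom Dom) (G : Set (Dom × Dom × Dom)) : Prop :=
  ∀ t ∈ G, t.1 ∈ D.Iri ∪ D.Blank ∧ t.2.1 ∈ D.Iri ∧ t.2.2 ∈ D.Iri ∪ D.Blank ∪ D.Lit

/-- rdf-to-inst(G, typing). -/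
def rdfToInst {Dom Shape : Type} (G : Set (Dom × Dom × Dom))
    (typing : Dom → Set (Option Shape)) : Set (Fact Dom Shape) :=
  {F | (∃ t ∈ G, F = Fact.triple t.1 t.2.1 t.2.2) ∨
       (∃ n ∈ nodes G, ∃ T ∈ typing n, F = factOf T n)}

/-- The graph component of inst-to-rdf(I). -/
def instGraph {Dom Shape : Type} (I : Set (Fact Dom Shape)) : Set (Dom × Dom × Dom) :=
  {t | Fact.triple t.1 t.2.1 t.2.2 ∈ I}

/-- The typing component of inst-to-rdf(I) (empty off the nodes of the graph). -/
def instTyping {Dom Shape : Type} (I : Set (Fact Dom Shape)) : Dom → Set (Option Shape) :=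
  fun n => {T | n ∈ nodes (instGraph I) ∧ factOf T n ∈ I}

/-- `(G, typing)` is correctly typed w.r.t. the schema `S`. -/
def correctlyTyped {Dom Shape : Type} (D : RDFDom Dom) (S : ShEx Dom Shape D)
    (G : Set (Dom × Dom × Dom)) (typing : Dom → Set (Option Shape)) : Prop :=
  ∀ n ∈ nodes G,
    ((none : Option Shape) ∈ typing n → n ∈ D.Lit) ∧
    (∀ T : Shape, some T ∈ typing n →
      n ∈ D.Iri ∪ D.Blank ∧
      ∀ tc ∈ S.δ T,
        (∀ m : Dom, (n, tc.prop, m) ∈ G → tc.target ∈ typing m) ∧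
        multOk tc.mult {m : Dom | (n, tc.prop, m) ∈ G})

/-- A fact `R(t)` of a relational instance. -/
structure RelFact (Dom RSym : Type) (ar : RSym → ℕ) where
  sym : RSym
  args : Fin (ar sym) → Dom

/-- A functional dependency `R : X → Y`. -/
structure Fd (RSym : Type) (ar : RSym → ℕ) where
  sym : RSym
  X : Set (Fin (ar sym))
  Y : Set (Fin (ar sym))

/-- The fd `φ` holds in the relational instance `I`. -/
def fdHolds {Dom RSym : Type} {ar : RSym → ℕ} (I : Set (RelFact Dom RSym ar))
    (φ : Fd RSym ar) : Prop :=
  ∀ t1 t2 : Fin (ar φ.sym) → Dom,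
    (⟨φ.sym, t1⟩ : RelFact Dom RSym ar) ∈ I →
    (⟨φ.sym, t2⟩ : RelFact Dom RSym ar) ∈ I →
    (∀ i ∈ φ.X, t1 i = t2 i) → ∀ j ∈ φ.Y, t1 j = t2 j

/-- A valid instance of the relational schema: finite, over `Lit \ NullLit`,
satisfying all functional dependencies. -/
def validInst {Dom RSym : Type} {ar : RSym → ℕ} (D : RDFDom Dom)
    (fds : Set (Fd RSym ar)) (I : Set (RelFact Dom RSym ar)) : Prop :=
  I.Finite ∧ (∀ F ∈ I, ∀ i, F.args i ∈ D.Lit \ D.NullLit) ∧ ∀ φ ∈ fds, fdHolds I φ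

/-- A relational atom with variables in `V`. -/
structure Atom (RSym : Type) (ar : RSym → ℕ) (V : Type) where
  sym : RSym
  args : Fin (ar sym) → V

/-- The object term of an std: either a variable or a functional term `g(z)`. -/
inductive Obj (FSym : Type) (far : FSym → ℕ) (V : Type) : Type
  | var (v : V)
  | app (g : FSym) (z : Fin (far g) → V)

/-- A fully-typed source-to-target tgd
`∀x,y. φ(x,y) ⇒ Triple(f(x), p, o) ∧ T_s(f(x)) ∧ T_o(o)`, where `x` has length
`far f`, `y` has length `ny`, and the body uses exactly the variables `x ∪ y`. -/
structure Std (Dom RSym FSym : Type) (ar : RSym → ℕ) (far : FSym → ℕ) where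
  f : FSym
  ny : ℕ
  body : Set (Atom RSym ar (Fin (far f) ⊕ Fin ny))
  bodyFinite : body.Finite
  covers : ∀ v : Fin (far f) ⊕ Fin ny, ∃ a ∈ body, ∃ i, a.args i = v
  p : Dom
  obj : Obj FSym far (Fin (far f) ⊕ Fin ny)

/-- The variables `x ∪ y` of an std. -/
abbrev Std.Var {Dom RSym FSym : Type} {ar : RSym → ℕ} {far : FSym → ℕ}
    (σ : Std Dom RSym FSym ar far) : Type :=
  Fin (far σ.f) ⊕ Fin σ.ny

/-- `ν^{F_int}(o)`. -/
def Obj.eval {Dom FSym : Type} {far : FSym → ℕ} {V : Type}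
    (Fint : (f : FSym) → (Fin (far f) → Dom) → Dom) (ν : V → Dom) :
    Obj FSym far V → Dom
  | .var v => ν v
  | .app g z => Fint g (fun i => ν (z i))

/-- The type `T_o` of the object of an std: `Lit` (i.e. `none`) for a variable,
`type(g)` for a functional term `g(z)`. -/
def Std.objType {Dom RSym FSym Shape : Type} {ar : RSym → ℕ} {far : FSym → ℕ}
    (ftype : FSym → Shape) (σ : Std Dom RSym FSym ar far) : Option Shape :=
  match σ.obj with
  | .var _ => none
  | .app g _ => some (ftype g)

/-- The valuation `ν` maps every atom of the body of `σ` to a fact of `I`. -/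
def bodyHolds {Dom RSym FSym : Type} {ar : RSym → ℕ} {far : FSym → ℕ}
    (σ : Std Dom RSym FSym ar far) (ν : σ.Var → Dom)
    (I : Set (RelFact Dom RSym ar)) : Prop :=
  ∀ a ∈ σ.body, (⟨a.sym, fun i => ν (a.args i)⟩ : RelFact Dom RSym ar) ∈ I

/-- `I ∪ J ∪ F_int ⊨ σ`. -/
def stdSat {Dom RSym FSym Shape : Type} {ar : RSym → ℕ} {far : FSym → ℕ}
    (Fint : (f : FSym) → (Fin (far f) → Dom) → Dom) (ftype : FSym → Shape)
    (σ : Std Dom RSym FSym ar far) (I : Set (RelFact Dom RSym ar))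
    (J : Set (Fact Dom Shape)) : Prop :=
  ∀ ν : σ.Var → Dom, bodyHolds σ ν I →
    Fact.triple (Fint σ.f fun i => ν (Sum.inl i)) σ.p (Obj.eval Fint ν σ.obj) ∈ J ∧
    Fact.shape (ftype σ.f) (Fint σ.f fun i => ν (Sum.inl i)) ∈ J ∧
    factOf (σ.objType ftype) (Obj.eval Fint ν σ.obj) ∈ J

/-- The std conforms to the schema `S`: if `δ(T_s)` contains a triple constraint
on the property `p` of the std then its target is `T_o`. -/
def Std.conforms {Dom RSym FSym Shape : Type} {ar : RSym → ℕ} {far : FSym → ℕ}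
    (D : RDFDom Dom) (S : ShEx Dom Shape D) (ftype : FSym → Shape)
    (σ : Std Dom RSym FSym ar far) : Prop :=
  ∀ tc ∈ S.δ (ftype σ.f), tc.prop = σ.p → tc.target = σ.objType ftype

/-- A fully-typed data exchange setting `(R, S, Σ_st, F, F_int)`. -/
structure DES (Dom RSym FSym Shape : Type) (ar : RSym → ℕ) (far : FSym → ℕ) where
  D : RDFDom Dom
  shex : ShEx Dom Shape D
  fds : Set (Fd RSym ar)
  fdsFin : fds.Finite
  ftype : FSym → Shape
  Fint : (f : FSym) → (Fin (far f) → Dom) → Dom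
  FintIri : ∀ f args, Fint f args ∈ D.Iri
  FintInj : ∀ f, Function.Injective (Fint f)
  FintDisj : ∀ f g, f ≠ g → ∀ a b, Fint f a ≠ Fint g b
  stds : Set (Std Dom RSym FSym ar far)
  stdsFin : stds.Finite
  stP : ∀ σ ∈ stds, σ.p ∈ D.Iri
  stConf : ∀ σ ∈ stds, σ.conforms D shex ftype

variable {Dom RSym FSym Shape : Type} {ar : RSym → ℕ} {far : FSym → ℕ}

/-- `σ1, σ2` are a contentious pair of stds of the setting. -/
def contentious (des : DES Dom RSym FSym Shape ar far)
    (σ1 σ2 : Std Dom RSym FSym ar far) : Prop :=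
  σ1 ∈ des.stds ∧ σ2 ∈ des.stds ∧ σ1.f = σ2.f ∧ σ1.p = σ2.p ∧
  ∃ tc ∈ des.shex.δ (des.ftype σ1.f), tc.prop = σ1.p ∧
    tc.target = σ1.objType des.ftype ∧ (tc.mult = Mult.one ∨ tc.mult = Mult.opt)

/-- `σ1, σ2` are functionally overlapping. -/
def funOverlap (des : DES Dom RSym FSym Shape ar far)
    (σ1 σ2 : Std Dom RSym FSym ar far) : Prop :=
  ∀ I : Set (RelFact Dom RSym ar), validInst des.D des.fds I →
    ∀ (ν1 : σ1.Var → Dom) (ν2 : σ2.Var → Dom),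
      bodyHolds σ1 ν1 I → bodyHolds σ2 ν2 I →
      HEq (fun i : Fin (far σ1.f) => ν1 (Sum.inl i))
          (fun i : Fin (far σ2.f) => ν2 (Sum.inl i)) →
      Obj.eval des.Fint ν1 σ1.obj = Obj.eval des.Fint ν2 σ2.obj

/-- The setting is key-covered. -/
def keyCovered (des : DES Dom RSym FSym Shape ar far) : Prop :=
  ∀ σ1 σ2, contentious des σ1 σ2 → funOverlap des σ1 σ2

/-- `J` is a solution for the valid source instance `I`. -/
def isSolution (des : DES Dom RSym FSym Shape ar far)
    (I : Set (RelFact Dom RSym ar)) (J : Set (Fact Dom Shape)) : Prop :=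
  (∀ σ ∈ des.stds, stdSat des.Fint des.ftype σ I J) ∧ satSigma des.D des.shex J

/-- The setting is consistent: every valid source instance has a solution. -/
def consistent (des : DES Dom RSym FSym Shape ar far) : Prop :=
  ∀ I : Set (RelFact Dom RSym ar), validInst des.D des.fds I →
    ∃ J : Set (Fact Dom Shape), isSolution des I J

/-- The canonical target instance `J_0` of `I`. -/
def canonical (des : DES Dom RSym FSym Shape ar far)
    (I : Set (RelFact Dom RSym ar)) : Set (Fact Dom Shape) :=
  {F | ∃ σ ∈ des.stds, ∃ ν : σ.Var → Dom, bodyHolds σ ν I ∧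
    (F = Fact.triple (des.Fint σ.f fun i => ν (Sum.inl i)) σ.p (Obj.eval des.Fint ν σ.obj) ∨
     F = Fact.shape (des.ftype σ.f) (des.Fint σ.f fun i => ν (Sum.inl i)) ∨
     F = factOf (σ.objType des.ftype) (Obj.eval des.Fint ν σ.obj))}

/-- The vector `z` of variables of the object term of an std (of length 1 if the
object is a variable). -/
def Std.objVars (σ : Std Dom RSym FSym ar far) : Σ n : ℕ, Fin n → σ.Var :=
  match σ.obj with
  | .var v => ⟨1, fun _ => v⟩
  | .app g z => ⟨far g, z⟩

/-- The view `V_σ(I)` as a set of pairs of tuples (encoded as lists):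
the values of `x` and the values of `z`. -/
def viewRel (σ : Std Dom RSym FSym ar far) (I : Set (RelFact Dom RSym ar)) :
    Set (List Dom × List Dom) :=
  {ab | ∃ ν : σ.Var → Dom, bodyHolds σ ν I ∧
        ab.1 = List.ofFn (fun i : Fin (far σ.f) => ν (Sum.inl i)) ∧
        ab.2 = List.ofFn (fun j => ν (σ.objVars.2 j))}

/-- The object terms of `σ1` and `σ2` are either both variables or both functional
terms over the same function symbol. -/
def objMatch (σ1 σ2 : Std Dom RSym FSym ar far) : Prop :=
  (∃ v1 v2, σ1.obj = Obj.var v1 ∧ σ2.obj = Obj.var v2) ∨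
  (∃ g z1 z2, σ1.obj = Obj.app g z1 ∧ σ2.obj = Obj.app g z2)

/-- `(T, p)` is a pair for which a fresh value `b^{T,p}` is needed:
`δ(T)` has a constraint on `p` with multiplicity in `{1, +}`. -/
def relevantBP {Dom Shape : Type} {D : RDFDom Dom} (S : ShEx Dom Shape D)
    (T : Shape) (p : Dom) : Prop :=
  ∃ tc ∈ S.δ T, tc.prop = p ∧ (tc.mult = Mult.one ∨ tc.mult = Mult.plus)

/-- `J_1 = { T'(b^{T,p}) | p :: T'^μ ∈ δ(T), μ ∈ {1,+} }`. -/
def J1set {Dom Shape : Type} {D : RDFDom Dom} (S : ShEx Dom Shape D)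
    (b : Shape → Dom → Dom) : Set (Fact Dom Shape) :=
  {F | ∃ T : Shape, ∃ tc ∈ S.δ T, (tc.mult = Mult.one ∨ tc.mult = Mult.plus) ∧
       F = factOf tc.target (b T tc.prop)}

/-- `J_2 = { Triple(b^{T,p}, q, b^{T_1,q}) | T_1(b^{T,p}) ∈ J_1, q :: T_2^μ ∈ δ(T_1), μ ∈ {1,+} }`. -/
def J2set {Dom Shape : Type} {D : RDFDom Dom} (S : ShEx Dom Shape D)
    (b : Shape → Dom → Dom) : Set (Fact Dom Shape) :=
  {F | ∃ (T1 : Shape) (n : Dom), Fact.shape T1 n ∈ J1set S b ∧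
       ∃ tc2 ∈ S.δ T1, (tc2.mult = Mult.one ∨ tc2.mult = Mult.plus) ∧
       F = Fact.triple n tc2.prop (b T1 tc2.prop)}

/-- `J_3 = { Triple(a, p, b^{T,p}) | T(a) ∈ J, p :: T'^μ ∈ δ(T), μ ∈ {1,+},
no Triple(a, p, b') in J }`. -/
def J3set {Dom Shape : Type} {D : RDFDom Dom} (S : ShEx Dom Shape D)
    (b : Shape → Dom → Dom) (J : Set (Fact Dom Shape)) : Set (Fact Dom Shape) :=
  {F | ∃ (T : Shape) (n : Dom), Fact.shape T n ∈ J ∧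
       ∃ tc ∈ S.δ T, (tc.mult = Mult.one ∨ tc.mult = Mult.plus) ∧
       (¬ ∃ y : Dom, Fact.triple n tc.prop y ∈ J) ∧
       F = Fact.triple n tc.prop (b T tc.prop)}

/-- The value `d` occurs in the fact `F`. -/
def occursIn {Dom Shape : Type} (d : Dom) : Fact Dom Shape → Prop
  | .triple s p o => d = s ∨ d = p ∨ d = o
  | .lit n => d = n
  | .shape _ n => d = n

variable {Dom RSym FSym Shape : Type} {ar : RSym → ℕ} {far : FSym → ℕ}

theorem canon_triple (des : DES Dom RSym FSym Shape ar far)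
    (I : Set (RelFact Dom RSym ar)) {a p b : Dom}
    (h : Fact.triple a p b ∈ canonical des I) :
    ∃ σ ∈ des.stds, ∃ ν : σ.Var → Dom, bodyHolds σ ν I ∧
      a = des.Fint σ.f (fun i => ν (Sum.inl i)) ∧ p = σ.p ∧
      b = Obj.eval des.Fint ν σ.obj := by
  obtain ⟨σ, hσ, ν, hν, h | h | h⟩ := h
  · injection h with h1 h2 h3
    exact ⟨σ, hσ, ν, hν, h1, h2, h3⟩
  · cases h
  · unfold factOf at h
    split at h <;> cases h

theorem canon_shape (des : DES Dom RSym FSym Shape ar far)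
    (I : Set (RelFact Dom RSym ar)) {T : Shape} {a : Dom}
    (h : Fact.shape T a ∈ canonical des I) :
    ∃ f args, T = des.ftype f ∧ a = des.Fint f args := by
  obtain ⟨σ, hσ, ν, hν, h | h | h⟩ := h
  · cases h
  · injection h with h1 h2
    exact ⟨_, _, h1, h2⟩
  · unfold Std.objType at h
    cases ho : σ.obj with
    | var v => simp [ho, factOf] at h
    | app g z =>
      simp only [ho, factOf, Obj.eval] at h
      injection h with h1 h2
      exact ⟨_, _, h1, h2⟩

theorem Fint_eq (des : DES Dom RSym FSym Shape ar far) {f g : FSym}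
    {a : Fin (far f) → Dom} {b : Fin (far g) → Dom}
    (h : des.Fint f a = des.Fint g b) : f = g ∧ HEq a b := by
  have hfg : f = g := by
    by_contra hne
    exact des.FintDisj f g hne a b h
  subst hfg
  exact ⟨rfl, heq_of_eq (des.FintInj f h)⟩

theorem stmt5 [Countable Dom] [Finite RSym] [Finite FSym] [Finite Shape]
    (des : DES Dom RSym FSym Shape ar far)
    (hkc : keyCovered des)
    (I : Set (RelFact Dom RSym ar)) (hI : validInst des.D des.fds I) :
    ∀ T : Shape, ∀ tc ∈ des.shex.δ T, (tc.mult = Mult.one ∨ tc.mult = Mult.opt) →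
      ∀ a b1 b2 : Dom, Fact.shape T a ∈ canonical des I →
        Fact.triple a tc.prop b1 ∈ canonical des I →
        Fact.triple a tc.prop b2 ∈ canonical des I → b1 = b2 := by
  intro T tc htc hm a b1 b2 hT h1 h2
  obtain ⟨f, args, hTf, ha⟩ := canon_shape des I hT
  obtain ⟨σ1, hσ1, ν1, hν1, ha1, hp1, hb1⟩ := canon_triple des I h1
  obtain ⟨σ2, hσ2, ν2, hν2, ha2, hp2, hb2⟩ := canon_triple des I h2
  obtain ⟨hf1, _⟩ := Fint_eq des (ha.symm.trans ha1)
  obtain ⟨hf, hx⟩ := Fint_eq des (ha1.symm.trans ha2)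
  rw [hTf, hf1] at htc
  rw [hb1, hb2]
  exact hkc σ1 σ2 ⟨hσ1, hσ2, hf, hp1.symm.trans hp2, tc, htc, hp1,
    des.stConf σ1 hσ1 tc htc hp1, hm⟩ I hI ν1 ν2 hν1 hν2 hx

end RdfDE
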